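/- Assume (A1), (A2) and (SMA) for the continuous-state localization model. Then for every horizon k ≥ 1, every prior density π_0, and every convex function φ : ℝ → ℝ for which the integrals exist, ∫_{ℝ^k} φ(m_1(y_{1:k}, π_0)) σ(π_0, y_{1:k}, 1) dy_{1:k} ≤ ∫_{ℝ^k} φ(m_2(y_{1:k}, π_0)) σ(π_0, y_{1:k}, 2) dy_{1:k}. In particular MSE{m_1(Y^{(1)}_{1:k}, π_0)} ≥ MSE{m_2(Y^{(2)}_{1:k}, π_0)} for all k. -/

import Mathlib

open Finset MeasureTheory

/-- `ψ` is single crossing (from below): once nonnegative it stays nonnegative. -/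
def SingleCrossing {α : Type*} [Preorder α] (ψ : α → ℝ) : Prop :=
  ∀ ⦃x x' : α⦄, x < x' → (0 ≤ ψ x → 0 ≤ ψ x') ∧ (ψ x' ≤ 0 → ψ x ≤ 0)

/-- Cdf of the observation density: `F(y|x) = ∫_{-∞}^y B x`. -/
noncomputable def obsCdf (B : ℝ → ℝ → ℝ) (y x : ℝ) : ℝ :=
  ∫ t in Set.Iic y, B x t

/-- Normalizer `σ(π₀, y_{1:k}) = ∫ π₀(x) Π_t B(x, y_t) dx`. -/
noncomputable def nrm (B : ℝ → ℝ → ℝ) (π₀ : ℝ → ℝ) {k : ℕ} (ys : Fin k → ℝ) : ℝ :=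
  ∫ x, π₀ x * ∏ t, B x (ys t)

/-- Conditional mean `m(y_{1:k}, π₀) = ∫ x π₀(x) Π_t B(x,y_t) dx / σ`. -/
noncomputable def cmean (B : ℝ → ℝ → ℝ) (π₀ : ℝ → ℝ) {k : ℕ} (ys : Fin k → ℝ) : ℝ :=
  (∫ x, x * (π₀ x * ∏ t, B x (ys t))) / nrm B π₀ ys

/-- Mean square error of the conditional mean at horizon `k`. -/
noncomputable def mse (B : ℝ → ℝ → ℝ) (π₀ : ℝ → ℝ) (k : ℕ) : ℝ :=
  ∫ ys : Fin k → ℝ, ∫ x, (x - cmean B π₀ ys) ^ 2 * (π₀ x * ∏ t, B x (ys t))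

open Filter Topology
open scoped ENNReal

/-! The value of accepting (payoff `h x`) or rejecting (payoff `0`) after an observation is
`∫ (∫ h x * B x y dx)⁺ dy`. The payoff `(x - t) * π₀ x` turns it into the expectation of
`(m - t)⁺`, the call payoff of the conditional mean `m`, and a convex function is affine plus a
mixture of call and put payoffs, so it is enough to compare the values of the two sensors for
payoffs that cross zero once from below.

For one observation, (A1) makes it optimal for sensor 1 to accept above a threshold. Choosing a
threshold for sensor 2 with the same acceptance probability at the crossing point of the payoff,
(A2) makes sensor 2 accept more often above that point and less often below it. For `k`
observations, replace sensor 1 by sensor 2 in one observation at a time: the densities of the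
others multiply the payoff by a nonnegative factor, which preserves the crossing. -/

section MarkovDensity

variable {X Y Z : Type*} [MeasurableSpace X] [MeasurableSpace Y] [MeasurableSpace Z]

/-- A family `κ x` of probability densities with respect to `ν`, jointly measurable in the state
`x` and the observation: the density form of a Markov kernel. -/
structure MarkovDensity (κ : X → Y → ℝ) (ν : Measure Y) : Prop where
  measurable : Measurable (Function.uncurry κ)
  nonneg : ∀ x y, 0 ≤ κ x y
  integral_eq_one : ∀ x, ∫ y, κ x y ∂ν = 1

namespace MarkovDensity

variable {μ : Measure X} {ν : Measure Y} {ρ : Measure Z} {κ : X → Y → ℝ} {η : X → Z → ℝ}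
  {h : X → ℝ}

lemma integrable (hκ : MarkovDensity κ ν) (x : X) : Integrable (κ x) ν :=
  integrable_of_integral_eq_one (hκ.integral_eq_one x)

lemma setIntegral_nonneg (hκ : MarkovDensity κ ν) (S : Set Y) (x : X) :
    0 ≤ ∫ y in S, κ x y ∂ν :=
  integral_nonneg (hκ.nonneg x)

lemma setIntegral_le_one (hκ : MarkovDensity κ ν) (S : Set Y) (x : X) :
    ∫ y in S, κ x y ∂ν ≤ 1 :=
  (setIntegral_le_integral (hκ.integrable x) (ae_of_all _ (hκ.nonneg x))).trans_eq
    (hκ.integral_eq_one x)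

lemma integrable_mul [SFinite ν] (hκ : MarkovDensity κ ν) (hh : Integrable h μ) :
    Integrable (fun p : X × Y => h p.1 * κ p.1 p.2) (μ.prod ν) := by
  have hmeas : AEStronglyMeasurable (fun p : X × Y => h p.1 * κ p.1 p.2) (μ.prod ν) :=
    hh.aestronglyMeasurable.comp_fst.mul hκ.measurable.aestronglyMeasurable
  refine (integrable_prod_iff hmeas).2
    ⟨ae_of_all _ fun x => (hκ.integrable x).const_mul (h x), ?_⟩
  simpa only [norm_mul, integral_const_mul, Real.norm_of_nonneg (hκ.nonneg _ _),
    hκ.integral_eq_one, mul_one] using hh.norm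

lemma ae_integrable_mul [SFinite μ] [SFinite ν] (hκ : MarkovDensity κ ν) (hh : Integrable h μ) :
    ∀ᵐ y ∂ν, Integrable (fun x => h x * κ x y) μ :=
  (hκ.integrable_mul hh).prod_left_ae

lemma exists_pos_and_integrable_mul [SFinite μ] [SFinite ν] (hκ : MarkovDensity κ ν)
    (hh : Integrable h μ) (x₀ : X) : ∃ p, 0 < κ x₀ p ∧ Integrable (fun x => h x * κ x p) μ := by
  by_contra! hnone
  have hzero : κ x₀ =ᵐ[ν] 0 := (hκ.ae_integrable_mul hh).mono fun y hy =>
    (hκ.nonneg x₀ y).antisymm' (not_lt.1 fun hpos => hnone y hpos hy)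
  simpa [integral_congr_ae hzero] using hκ.integral_eq_one x₀

lemma integrable_integral_mul [SFinite μ] [SFinite ν] (hκ : MarkovDensity κ ν)
    (hh : Integrable h μ) : Integrable (fun y => ∫ x, h x * κ x y ∂μ) ν :=
  (hκ.integrable_mul hh).integral_prod_right

lemma integrable_mul_setIntegral [SFinite ν] (hκ : MarkovDensity κ ν) (hh : Integrable h μ)
    (S : Set Y) : Integrable (fun x => h x * ∫ y in S, κ x y ∂ν) μ := by
  have hS := (hκ.integrable_mul hh).mono_measure
    (Measure.prod_mono le_rfl (Measure.restrict_le_self (s := S)))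
  simpa only [integral_const_mul] using hS.integral_prod_left

lemma setIntegral_integral_mul [SFinite μ] [SFinite ν] (hκ : MarkovDensity κ ν)
    (hh : Integrable h μ) (S : Set Y) :
    ∫ y in S, ∫ x, h x * κ x y ∂μ ∂ν = ∫ x, h x * ∫ y in S, κ x y ∂ν ∂μ := by
  have hS := (hκ.integrable_mul hh).mono_measure
    (Measure.prod_mono le_rfl (Measure.restrict_le_self (s := S)))
  rw [← integral_integral_swap (f := fun x y => h x * κ x y) hS]
  simp only [integral_const_mul]

lemma integral_integral_mul [SFinite μ] [SFinite ν] (hκ : MarkovDensity κ ν)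
    (hh : Integrable h μ) : ∫ y, ∫ x, h x * κ x y ∂μ ∂ν = ∫ x, h x ∂μ := by
  simpa [hκ.integral_eq_one] using hκ.setIntegral_integral_mul hh Set.univ

lemma prod [SFinite ν] [SFinite ρ] (hκ : MarkovDensity κ ν) (hη : MarkovDensity η ρ) :
    MarkovDensity (fun x (p : Y × Z) => κ x p.1 * η x p.2) (ν.prod ρ) where
  measurable :=
    (hκ.measurable.comp (by fun_prop : Measurable fun q : X × Y × Z => (q.1, q.2.1))).mul
      (hη.measurable.comp (by fun_prop : Measurable fun q : X × Y × Z => (q.1, q.2.2)))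
  nonneg x p := mul_nonneg (hκ.nonneg x p.1) (hη.nonneg x p.2)
  integral_eq_one x := by
    rw [integral_prod_mul, hκ.integral_eq_one, hη.integral_eq_one, one_mul]

lemma pi [SigmaFinite ν] {ι : Type*} [Fintype ι] (hκ : MarkovDensity κ ν) :
    MarkovDensity (fun x (ys : ι → Y) => ∏ t, κ x (ys t)) (Measure.pi fun _ => ν) where
  measurable := Finset.measurable_fun_prod _ fun t _ =>
    hκ.measurable.comp (by fun_prop : Measurable fun q : X × (ι → Y) => (q.1, q.2 t))
  nonneg x ys := Finset.prod_nonneg fun t _ => hκ.nonneg x (ys t)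
  integral_eq_one x := by
    rw [integral_fintype_prod_eq_prod fun _ => κ x]
    simp [hκ.integral_eq_one]

end MarkovDensity

end MarkovDensity

section AcceptanceValue

variable {X Y Z Y' Z' : Type*} [MeasurableSpace X] [MeasurableSpace Y] [MeasurableSpace Z]
  [MeasurableSpace Y'] [MeasurableSpace Z'] {μ : Measure X}
  {ν : Measure Y} {ρ : Measure Z} {ν' : Measure Y'} {ρ' : Measure Z'}
  {κ : X → Y → ℝ} {η : X → Z → ℝ} {κ' : X → Y' → ℝ} {η' : X → Z' → ℝ} {h : X → ℝ}

/-- The optimal expected payoff of a decision maker who sees an observation `y` with density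
`κ x y` and then either accepts, earning `h x`, or rejects, earning `0`; the prior is absorbed
in `h`. -/
noncomputable def acceptanceValue (μ : Measure X) (ν : Measure Y) (h : X → ℝ) (κ : X → Y → ℝ) :
    ℝ≥0∞ :=
  ∫⁻ y, ENNReal.ofReal (∫ x, h x * κ x y ∂μ) ∂ν

lemma acceptanceValue_prod [SFinite μ] [SFinite ν] [SFinite ρ] (hκ : MarkovDensity κ ν)
    (hη : MarkovDensity η ρ) (hh : Integrable h μ) :
    acceptanceValue μ (ν.prod ρ) h (fun x p => κ x p.1 * η x p.2) =
      ∫⁻ y, acceptanceValue μ ρ (fun x => h x * κ x y) η ∂ν := by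
  simp only [acceptanceValue, mul_assoc]
  exact lintegral_prod _ ((hκ.prod hη).integrable_integral_mul hh).aemeasurable.ennreal_ofReal

lemma acceptanceValue_prod_symm [SFinite μ] [SFinite ν] [SFinite ρ] (hκ : MarkovDensity κ ν)
    (hη : MarkovDensity η ρ) (hh : Integrable h μ) :
    acceptanceValue μ (ν.prod ρ) h (fun x p => κ x p.1 * η x p.2) =
      ∫⁻ z, acceptanceValue μ ν (fun x => h x * η x z) κ ∂ρ := by
  simp only [acceptanceValue, mul_assoc, mul_comm (η _ _)]
  exact lintegral_prod_symm _
    ((hκ.prod hη).integrable_integral_mul hh).aemeasurable.ennreal_ofReal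

lemma acceptanceValue_pi_succ [SigmaFinite ν] (h : X → ℝ) (κ : X → Y → ℝ) (n : ℕ) :
    acceptanceValue μ (Measure.pi fun _ : Fin (n + 1) => ν) h (fun x ys => ∏ t, κ x (ys t)) =
      acceptanceValue μ (ν.prod (Measure.pi fun _ : Fin n => ν)) h
        (fun x p => κ x p.1 * ∏ t, κ x (p.2 t)) := by
  have hmp := measurePreserving_piFinSuccAbove (fun _ : Fin (n + 1) => ν) 0
  rw [acceptanceValue, acceptanceValue,
    ← hmp.lintegral_comp_emb (MeasurableEquiv.measurableEmbedding _)]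
  simp only [Fin.prod_univ_succ]
  rfl

lemma ofReal_setIntegral_le_acceptanceValue [SFinite μ] [SFinite ν] (hκ : MarkovDensity κ ν)
    (hh : Integrable h μ) (S : Set Y) :
    ENNReal.ofReal (∫ x, h x * ∫ y in S, κ x y ∂ν ∂μ) ≤ acceptanceValue μ ν h κ := by
  set H : Y → ℝ := fun y => ∫ x, h x * κ x y ∂μ
  have hH : Integrable H ν := hκ.integrable_integral_mul hh
  rw [← hκ.setIntegral_integral_mul hh]
  calc ENNReal.ofReal (∫ y in S, H y ∂ν) ≤ ENNReal.ofReal (∫ y, max (H y) 0 ∂ν) :=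
        ENNReal.ofReal_le_ofReal <|
          (integral_mono hH.integrableOn hH.pos_part.integrableOn fun y => le_max_left _ _).trans
            (setIntegral_le_integral hH.pos_part (ae_of_all _ fun y => le_max_right _ _))
    _ = ∫⁻ y, ENNReal.ofReal (max (H y) 0) ∂ν :=
        ofReal_integral_eq_lintegral_ofReal hH.pos_part (ae_of_all _ fun y => le_max_right _ _)
    _ = acceptanceValue μ ν h κ := by simp [acceptanceValue, H]

/-- `h` changes sign at `θ` at most, from nonpositive to nonnegative. -/
def CrossesZeroAt {X : Type*} [Preorder X] (h : X → ℝ) (θ : X) : Prop :=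
  (∀ x ≤ θ, h x ≤ 0) ∧ ∀ x, θ ≤ x → 0 ≤ h x

lemma CrossesZeroAt.mul_of_nonneg {X : Type*} [Preorder X] {h g : X → ℝ} {θ : X}
    (hh : CrossesZeroAt h θ) (hg : ∀ x, 0 ≤ g x) : CrossesZeroAt (fun x => h x * g x) θ :=
  ⟨fun x hx => mul_nonpos_of_nonpos_of_nonneg (hh.1 x hx) (hg x),
    fun x hx => mul_nonneg (hh.2 x hx) (hg x)⟩

variable [Preorder X]

/-- Observing through `κ'` is worth at least as much as observing through `κ` in every
accept-or-reject problem whose payoff crosses zero once from below. -/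
def CrossingDominated (μ : Measure X) (ν : Measure Y) (κ : X → Y → ℝ) (ν' : Measure Y')
    (κ' : X → Y' → ℝ) : Prop :=
  ∀ ⦃θ : X⦄ ⦃h : X → ℝ⦄, Integrable h μ → CrossesZeroAt h θ →
    acceptanceValue μ ν h κ ≤ acceptanceValue μ ν' h κ'

-- Upgrade one coordinate at a time: given the other coordinate, its density is one more
-- nonnegative factor of the payoff and does not move the crossing point.
lemma CrossingDominated.prod [SFinite μ] [SFinite ν] [SFinite ρ] [SFinite ν'] [SFinite ρ']
    (hκ : MarkovDensity κ ν) (hη : MarkovDensity η ρ) (hκ' : MarkovDensity κ' ν')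
    (hη' : MarkovDensity η' ρ') (hκκ' : CrossingDominated μ ν κ ν' κ')
    (hηη' : CrossingDominated μ ρ η ρ' η') :
    CrossingDominated μ (ν.prod ρ) (fun x p => κ x p.1 * η x p.2) (ν'.prod ρ')
      (fun x p => κ' x p.1 * η' x p.2) := by
  intro θ h hh hcross
  calc acceptanceValue μ (ν.prod ρ) h (fun x p => κ x p.1 * η x p.2)
      = ∫⁻ y, acceptanceValue μ ρ (fun x => h x * κ x y) η ∂ν := acceptanceValue_prod hκ hη hh
    _ ≤ ∫⁻ y, acceptanceValue μ ρ' (fun x => h x * κ x y) η' ∂ν :=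
        lintegral_mono_ae <| (hκ.ae_integrable_mul hh).mono fun y hy =>
          hηη' hy (hcross.mul_of_nonneg fun x => hκ.nonneg x y)
    _ = ∫⁻ z, acceptanceValue μ ν (fun x => h x * η' x z) κ ∂ρ' := by
        rw [← acceptanceValue_prod hκ hη' hh, acceptanceValue_prod_symm hκ hη' hh]
    _ ≤ ∫⁻ z, acceptanceValue μ ν' (fun x => h x * η' x z) κ' ∂ρ' :=
        lintegral_mono_ae <| (hη'.ae_integrable_mul hh).mono fun z hz =>
          hκκ' hz (hcross.mul_of_nonneg fun x => hη'.nonneg x z)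
    _ = acceptanceValue μ (ν'.prod ρ') h (fun x p => κ' x p.1 * η' x p.2) :=
        (acceptanceValue_prod_symm hκ' hη' hh).symm

lemma CrossingDominated.pi [SFinite μ] [SigmaFinite ν] [SigmaFinite ν'] (hκ : MarkovDensity κ ν)
    (hκ' : MarkovDensity κ' ν') (hκκ' : CrossingDominated μ ν κ ν' κ') (n : ℕ) :
    CrossingDominated μ (Measure.pi fun _ : Fin n => ν) (fun x ys => ∏ t, κ x (ys t))
      (Measure.pi fun _ : Fin n => ν') (fun x ys => ∏ t, κ' x (ys t)) := by
  induction n with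
  | zero => intro θ h _ _; simp [acceptanceValue]
  | succ n ih =>
    intro θ h hh hcross
    rw [acceptanceValue_pi_succ, acceptanceValue_pi_succ]
    exact hκκ'.prod hκ hκ.pi hκ' hκ'.pi ih hh hcross

end AcceptanceValue

section OneObservation

/-- Total positivity of order two, i.e. the monotone likelihood ratio property. -/
def IsTP2 {X Y : Type*} [LE X] [LE Y] (B : X → Y → ℝ) : Prop :=
  ∀ x x' y y', x ≤ x' → y ≤ y' → B x y' * B x' y ≤ B x y * B x' y'

section Threshold

variable {X Y : Type*} [MeasurableSpace X] [LinearOrder X] [LinearOrder Y] {μ : Measure X}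
  {B : X → Y → ℝ} {h : X → ℝ} {θ : X} {y y' : Y}

lemma IsTP2.mul_integral_le (hTP : IsTP2 B) (hcross : CrossesZeroAt h θ) (hyy' : y ≤ y')
    (hy : Integrable (fun x => h x * B x y) μ) (hy' : Integrable (fun x => h x * B x y') μ) :
    B θ y' * ∫ x, h x * B x y ∂μ ≤ B θ y * ∫ x, h x * B x y' ∂μ := by
  rw [← integral_const_mul, ← integral_const_mul]
  refine integral_mono (hy.const_mul _) (hy'.const_mul _) fun x => ?_
  rcases le_total x θ with hx | hx
  · linarith [mul_le_mul_of_nonpos_left (hTP x θ y y' hx hyy') (hcross.1 x hx)]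
  · linarith [mul_le_mul_of_nonneg_left (hTP θ x y y' hx hyy') (hcross.2 x hx)]

lemma IsTP2.integral_nonneg_of_lt [MeasurableSpace Y] [SFinite μ] {ν : Measure Y} [SFinite ν]
    (hTP : IsTP2 B) (hB : MarkovDensity B ν) (hh : Integrable h μ) (hcross : CrossesZeroAt h θ)
    (hyy' : y < y') (hpos : 0 < ∫ x, h x * B x y ∂μ) : 0 ≤ ∫ x, h x * B x y' ∂μ := by
  by_contra! hneg
  have hy : Integrable (fun x => h x * B x y) μ := .of_integral_ne_zero hpos.ne'
  have hy' : Integrable (fun x => h x * B x y') μ := .of_integral_ne_zero hneg.ne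
  have hle := hTP.mul_integral_le hcross hyy'.le hy hy'
  have hθy' : B θ y' = 0 := by nlinarith [hB.nonneg θ y, hB.nonneg θ y']
  have hθy : B θ y = 0 := by nlinarith [hB.nonneg θ y, hB.nonneg θ y']
  -- Neither `y` nor `y'` is possible at `θ`: compare with a third observation that is.
  obtain ⟨p, hp, hpint⟩ := hB.exists_pos_and_integrable_mul hh θ
  rcases le_total p y' with hpy' | hy'p
  · have hle' := hTP.mul_integral_le hcross hpy' hpint hy'
    rw [hθy', zero_mul] at hle'
    exact hle'.not_gt (mul_neg_of_pos_of_neg hp hneg)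
  · have hle' := hTP.mul_integral_le hcross (hyy'.le.trans hy'p) hy hpint
    rw [hθy, zero_mul] at hle'
    exact hle'.not_gt (mul_pos hp hpos)

end Threshold

lemma exists_isUpperSet_lintegral_ofReal_eq {ν : Measure ℝ} {H : ℝ → ℝ} (hH : Integrable H ν)
    (hsign : ∀ y y', y < y' → 0 < H y → 0 ≤ H y') :
    ∃ S : Set ℝ, IsUpperSet S ∧
      ∫⁻ y, ENNReal.ofReal (H y) ∂ν = ENNReal.ofReal (∫ y in S, H y ∂ν) := by
  set S : Set ℝ := {y | ∃ z ≤ y, 0 < H z}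
  have hS : IsUpperSet S := fun y y' hyy' ⟨z, hzy, hz⟩ => ⟨z, hzy.trans hyy', hz⟩
  have hnonneg : ∀ y ∈ S, 0 ≤ H y := fun y ⟨z, hzy, hz⟩ =>
    hzy.eq_or_lt.elim (fun hzy => hzy ▸ hz.le) fun hzy => hsign z y hzy hz
  have hsupp : (Function.support fun y => ENNReal.ofReal (H y)) ⊆ S := fun y hy =>
    ⟨y, le_rfl, by simpa using hy⟩
  refine ⟨S, hS, ?_⟩
  rw [ofReal_integral_eq_lintegral_ofReal hH.integrableOn
    (ae_restrict_of_forall_mem hS.ordConnected.measurableSet hnonneg),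
    setLIntegral_eq_of_support_subset hsupp]

lemma eq_empty_or_eq_univ_or_ae_eq_Ioi_of_isUpperSet {S : Set ℝ} (hS : IsUpperSet S) :
    S = ∅ ∨ S = Set.univ ∨ ∃ c, S =ᵐ[volume] Set.Ioi c := by
  refine S.eq_empty_or_nonempty.imp_right fun hne => ?_
  by_cases hbdd : BddBelow S
  · refine .inr ⟨sInf S, ?_⟩
    have hIoi : Set.Ioi (sInf S) ⊆ S := fun y hy =>
      have ⟨z, hz, hzy⟩ := exists_lt_of_csInf_lt hne hy
      hS hzy.le hz
    have hIci : S ⊆ Set.Ici (sInf S) := fun y hy => csInf_le hbdd hy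
    exact (hIci.eventuallyLE.trans Ioi_ae_eq_Ici.symm.le).antisymm hIoi.eventuallyLE
  · refine .inl (Set.eq_univ_of_forall fun y => ?_)
    obtain ⟨z, hz, hzy⟩ := not_bddBelow_iff.1 hbdd y
    exact hS hzy.le hz

section Cdf

variable {B B₁ B₂ : ℝ → ℝ → ℝ}

lemma setIntegral_Ioi_eq_one_sub_obsCdf (hB : MarkovDensity B volume) (y x : ℝ) :
    ∫ t in Set.Ioi y, B x t = 1 - obsCdf B y x := by
  rw [eq_sub_iff_add_eq', ← hB.integral_eq_one x]
  exact intervalIntegral.integral_Iic_add_Ioi (hB.integrable x).integrableOn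
    (hB.integrable x).integrableOn

lemma tendsto_obsCdf_atTop (hB : MarkovDensity B volume) (x : ℝ) :
    Tendsto (fun y => obsCdf B y x) atTop (𝓝 1) :=
  hB.integral_eq_one x ▸
    (aecover_Iic tendsto_id).integral_tendsto_of_countably_generated (hB.integrable x)

lemma tendsto_obsCdf_atBot (B : ℝ → ℝ → ℝ) (x : ℝ) :
    Tendsto (fun y => obsCdf B y x) atBot (𝓝 0) :=
  tendsto_integral_Iic_zero tendsto_id

lemma continuous_obsCdf (hB : MarkovDensity B volume) (x : ℝ) :
    Continuous fun y => obsCdf B y x := by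
  have heq : (fun y => obsCdf B y x) = fun y => obsCdf B 0 x + ∫ t in (0 : ℝ)..y, B x t := by
    funext y
    rw [← intervalIntegral.integral_Iic_sub_Iic (hB.integrable x).integrableOn
      (hB.integrable x).integrableOn, obsCdf, obsCdf, add_sub_cancel]
  rw [heq]
  exact continuous_const.add ((hB.integrable x).continuous_primitive 0)

lemma exists_obsCdf_eq (hB : MarkovDensity B volume) (x : ℝ) {p : ℝ} (hp₀ : 0 < p) (hp₁ : p < 1) :
    ∃ y, obsCdf B y x = p := by
  obtain ⟨a, ha⟩ := ((tendsto_obsCdf_atBot B x).eventually_lt_const hp₀).exists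
  obtain ⟨b, hb⟩ := ((tendsto_obsCdf_atTop hB x).eventually_const_lt hp₁).exists
  exact mem_range_of_exists_le_of_exists_ge (continuous_obsCdf hB x) ⟨a, ha.le⟩ ⟨b, hb.le⟩

end Cdf

section Matching

variable {B₁ B₂ : ℝ → ℝ → ℝ}

/-- Accepting on `S₂` under `B₂` is at most as likely as accepting on `S₁` under `B₁` in the states
below `θ`, and at least as likely in the states above `θ`. -/
def SteeperAcceptance (B₁ B₂ : ℝ → ℝ → ℝ) (θ : ℝ) (S₁ S₂ : Set ℝ) : Prop :=
  (∀ x ≤ θ, ∫ y in S₂, B₂ x y ≤ ∫ y in S₁, B₁ x y) ∧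
    ∀ x, θ ≤ x → ∫ y in S₁, B₁ x y ≤ ∫ y in S₂, B₂ x y

lemma steeperAcceptance_Ioi_of_obsCdf_eq (hB₁ : MarkovDensity B₁ volume)
    (hB₂ : MarkovDensity B₂ volume) {c y θ : ℝ}
    (hcross : SingleCrossing fun x => obsCdf B₁ c x - obsCdf B₂ y x)
    (heq : obsCdf B₂ y θ = obsCdf B₁ c θ) :
    SteeperAcceptance B₁ B₂ θ (Set.Ioi c) (Set.Ioi y) := by
  simp only [SteeperAcceptance, setIntegral_Ioi_eq_one_sub_obsCdf hB₁,
    setIntegral_Ioi_eq_one_sub_obsCdf hB₂, sub_le_sub_iff_left]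
  constructor
  · intro x hx
    rcases hx.eq_or_lt with rfl | hx
    · exact heq.ge
    · exact sub_nonpos.1 ((hcross hx).2 (sub_nonpos.2 heq.ge))
  · intro x hx
    rcases hx.eq_or_lt with rfl | hx
    · exact heq.le
    · exact sub_nonneg.1 ((hcross hx).1 (sub_nonneg.2 heq.le))

lemma steeperAcceptance_Ioi_univ (hB₁ : MarkovDensity B₁ volume) (hB₂ : MarkovDensity B₂ volume)
    {c θ : ℝ} (hcross : ∀ y, SingleCrossing fun x => obsCdf B₁ c x - obsCdf B₂ y x)
    (hzero : obsCdf B₁ c θ = 0) : SteeperAcceptance B₁ B₂ θ (Set.Ioi c) Set.univ := by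
  simp only [SteeperAcceptance, setIntegral_univ, hB₂.integral_eq_one,
    setIntegral_Ioi_eq_one_sub_obsCdf hB₁]
  refine ⟨fun x hx => ?_, fun x _ => sub_le_self _ (hB₁.setIntegral_nonneg _ x)⟩
  suffices hx₀ : obsCdf B₁ c x ≤ 0 by linarith
  rcases hx.eq_or_lt with rfl | hx
  · exact hzero.le
  · refine ge_of_tendsto (tendsto_obsCdf_atBot B₂ x) (.of_forall fun y => ?_)
    have hθ : obsCdf B₁ c θ - obsCdf B₂ y θ ≤ 0 := by
      rw [hzero, zero_sub, neg_nonpos]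
      exact hB₂.setIntegral_nonneg _ θ
    exact sub_nonpos.1 ((hcross y hx).2 hθ)

lemma steeperAcceptance_Ioi_empty (hB₁ : MarkovDensity B₁ volume) (hB₂ : MarkovDensity B₂ volume)
    {c θ : ℝ} (hcross : ∀ y, SingleCrossing fun x => obsCdf B₁ c x - obsCdf B₂ y x)
    (hone : obsCdf B₁ c θ = 1) : SteeperAcceptance B₁ B₂ θ (Set.Ioi c) ∅ := by
  simp only [SteeperAcceptance, setIntegral_empty]
  refine ⟨fun x _ => hB₁.setIntegral_nonneg _ x, fun x hx => ?_⟩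
  rw [setIntegral_Ioi_eq_one_sub_obsCdf hB₁, sub_nonpos]
  rcases hx.eq_or_lt with rfl | hx
  · exact hone.ge
  · refine le_of_tendsto (tendsto_obsCdf_atTop hB₂ x) (.of_forall fun y => ?_)
    have hθ : 0 ≤ obsCdf B₁ c θ - obsCdf B₂ y θ := by
      rw [hone, sub_nonneg]
      exact hB₂.setIntegral_le_one _ θ
    exact sub_nonneg.1 ((hcross y hx).1 hθ)

lemma exists_steeperAcceptance (hB₁ : MarkovDensity B₁ volume) (hB₂ : MarkovDensity B₂ volume)
    (hcross : ∀ c y, SingleCrossing fun x => obsCdf B₁ c x - obsCdf B₂ y x) (θ : ℝ)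
    {S : Set ℝ} (hS : IsUpperSet S) : ∃ S', SteeperAcceptance B₁ B₂ θ S S' := by
  rcases eq_empty_or_eq_univ_or_ae_eq_Ioi_of_isUpperSet hS with rfl | rfl | ⟨c, hc⟩
  · exact ⟨∅, by simp [SteeperAcceptance]⟩
  · exact ⟨Set.univ, by simp [SteeperAcceptance, hB₁.integral_eq_one, hB₂.integral_eq_one]⟩
  simp only [SteeperAcceptance, setIntegral_congr_set hc]
  rcases (hB₁.setIntegral_nonneg (Set.Iic c) θ).eq_or_lt with hzero | hpos
  · exact ⟨Set.univ, steeperAcceptance_Ioi_univ hB₁ hB₂ (hcross c) hzero.symm⟩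
  rcases (hB₁.setIntegral_le_one (Set.Iic c) θ).eq_or_lt with hone | hlt
  · exact ⟨∅, steeperAcceptance_Ioi_empty hB₁ hB₂ (hcross c) hone⟩
  obtain ⟨y, hy⟩ := exists_obsCdf_eq hB₂ θ hpos hlt
  exact ⟨Set.Ioi y, steeperAcceptance_Ioi_of_obsCdf_eq hB₁ hB₂ (hcross c y) hy⟩

lemma crossingDominated_of_singleCrossing {μ : Measure ℝ} [SFinite μ]
    (hB₁ : MarkovDensity B₁ volume) (hB₂ : MarkovDensity B₂ volume) (hTP : IsTP2 B₁)
    (hcross : ∀ c y, SingleCrossing fun x => obsCdf B₁ c x - obsCdf B₂ y x) :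
    CrossingDominated μ volume B₁ volume B₂ := by
  intro θ h hh hθ
  obtain ⟨S, hS, heq⟩ := exists_isUpperSet_lintegral_ofReal_eq (hB₁.integrable_integral_mul hh)
    fun y y' => hTP.integral_nonneg_of_lt hB₁ hh hθ
  obtain ⟨S', hbelow, habove⟩ := exists_steeperAcceptance hB₁ hB₂ hcross θ hS
  rw [acceptanceValue, heq, hB₁.setIntegral_integral_mul hh]
  refine le_trans (ENNReal.ofReal_le_ofReal ?_) (ofReal_setIntegral_le_acceptanceValue hB₂ hh S')
  refine integral_mono (hB₁.integrable_mul_setIntegral hh S)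
    (hB₂.integrable_mul_setIntegral hh S') fun x => ?_
  rcases le_total x θ with hx | hx
  · exact mul_le_mul_of_nonpos_left (hbelow x hx) (hθ.1 x hx)
  · exact mul_le_mul_of_nonneg_left (habove x hx) (hθ.2 x hx)

end Matching

end OneObservation

section ConvexOrder

section Hinge

variable (g : StieltjesFunction ℝ) {a b : ℝ}

lemma stieltjes_lintegral_Ioi_ofReal_sub (hab : a ≤ b) :
    ∫⁻ u in Set.Ioi a, ENNReal.ofReal (b - u) ∂g.measure =
      ENNReal.ofReal (∫ t in a..b, (g t - g a)) := by
  set S : Set (ℝ × ℝ) := {p | a < p.1 ∧ p.1 ≤ p.2 ∧ p.2 ≤ b} with hS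
  have hSm : MeasurableSet S := by measurability
  calc
    _ = ∫⁻ u, volume (Prod.mk u ⁻¹' S) ∂g.measure := by
      rw [← lintegral_indicator measurableSet_Ioi]
      refine lintegral_congr fun u => ?_
      by_cases hu : a < u
      · have hsection : Prod.mk u ⁻¹' S = Set.Icc u b := by ext; simp [hS, hu]
        rw [Set.indicator_of_mem (Set.mem_Ioi.2 hu), hsection, Real.volume_Icc]
      · have hsection : Prod.mk u ⁻¹' S = ∅ := by ext; simp [hS, hu]
        rw [Set.indicator_of_notMem (by simpa using hu), hsection, measure_empty]
    _ = ∫⁻ t, g.measure ((fun u => (u, t)) ⁻¹' S) := by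
      rw [← Measure.prod_apply hSm, Measure.prod_apply_symm hSm]
    _ = ∫⁻ t in Set.Ioc a b, ENNReal.ofReal (g t - g a) := by
      rw [← lintegral_indicator measurableSet_Ioc]
      refine lintegral_congr fun t => ?_
      by_cases ht : t ∈ Set.Ioc a b
      · have hsection : (fun u => (u, t)) ⁻¹' S = Set.Ioc a t := by ext; simp [hS, ht.2]
        rw [Set.indicator_of_mem ht, hsection, g.measure_Ioc]
      · have hsection : (fun u => (u, t)) ⁻¹' S = ∅ :=
          Set.eq_empty_of_forall_notMem fun u hu => ht ⟨hu.1.trans_le hu.2.1, hu.2.2⟩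
        rw [Set.indicator_of_notMem ht, hsection, measure_empty]
    _ = ENNReal.ofReal (∫ t in a..b, (g t - g a)) := by
      rw [intervalIntegral.integral_of_le hab, ofReal_integral_eq_lintegral_ofReal
        (g.mono.intervalIntegrable.sub intervalIntegrable_const).1
        (ae_restrict_of_forall_mem measurableSet_Ioc fun t ht => sub_nonneg.2 (g.mono ht.1.le))]

lemma stieltjes_lintegral_Iic_ofReal_sub (hab : a ≤ b) :
    ∫⁻ u in Set.Iic b, ENNReal.ofReal (u - a) ∂g.measure =
      ENNReal.ofReal (∫ t in a..b, (g b - g t)) := by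
  set S : Set (ℝ × ℝ) := {p | a < p.2 ∧ p.2 < p.1 ∧ p.1 ≤ b} with hS
  have hSm : MeasurableSet S := by measurability
  calc
    _ = ∫⁻ u, volume (Prod.mk u ⁻¹' S) ∂g.measure := by
      rw [← lintegral_indicator measurableSet_Iic]
      refine lintegral_congr fun u => ?_
      by_cases hu : u ≤ b
      · have hsection : Prod.mk u ⁻¹' S = Set.Ioo a u := by ext; simp [hS, hu]
        rw [Set.indicator_of_mem (Set.mem_Iic.2 hu), hsection, Real.volume_Ioo]
      · have hsection : Prod.mk u ⁻¹' S = ∅ := by ext; simp [hS, hu]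
        rw [Set.indicator_of_notMem (by simpa using hu), hsection, measure_empty]
    _ = ∫⁻ t, g.measure ((fun u => (u, t)) ⁻¹' S) := by
      rw [← Measure.prod_apply hSm, Measure.prod_apply_symm hSm]
    _ = ∫⁻ t in Set.Ioc a b, ENNReal.ofReal (g b - g t) := by
      rw [← lintegral_indicator measurableSet_Ioc]
      refine lintegral_congr fun t => ?_
      by_cases ht : t ∈ Set.Ioc a b
      · have hsection : (fun u => (u, t)) ⁻¹' S = Set.Ioc t b := by ext; simp [hS, ht.1]
        rw [Set.indicator_of_mem ht, hsection, g.measure_Ioc]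
      · have hsection : (fun u => (u, t)) ⁻¹' S = ∅ :=
          Set.eq_empty_of_forall_notMem fun u hu => ht ⟨hu.1, hu.2.1.le.trans hu.2.2⟩
        rw [Set.indicator_of_notMem ht, hsection, measure_empty]
    _ = ENNReal.ofReal (∫ t in a..b, (g b - g t)) := by
      rw [intervalIntegral.integral_of_le hab, ofReal_integral_eq_lintegral_ofReal
        (intervalIntegrable_const.sub g.mono.intervalIntegrable).1
        (ae_restrict_of_forall_mem measurableSet_Ioc fun t ht => sub_nonneg.2 (g.mono ht.2))]

lemma stieltjes_ofReal_integral_sub (c x : ℝ) :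
    ENNReal.ofReal (∫ t in c..x, (g t - g c)) =
      (∫⁻ u in Set.Ioi c, ENNReal.ofReal (x - u) ∂g.measure) +
        ∫⁻ u in Set.Iic c, ENNReal.ofReal (u - x) ∂g.measure := by
  rcases le_total c x with hcx | hxc
  · have hzero : ∫⁻ u in Set.Iic c, ENNReal.ofReal (u - x) ∂g.measure = 0 :=
      setLIntegral_eq_zero measurableSet_Iic fun u hu =>
        ENNReal.ofReal_of_nonpos (sub_nonpos.2 (hu.trans hcx))
    rw [stieltjes_lintegral_Ioi_ofReal_sub g hcx, hzero, add_zero]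
  · have hzero : ∫⁻ u in Set.Ioi c, ENNReal.ofReal (x - u) ∂g.measure = 0 :=
      setLIntegral_eq_zero measurableSet_Ioi fun u hu =>
        ENNReal.ofReal_of_nonpos (sub_nonpos.2 (hxc.trans hu.le))
    rw [stieltjes_lintegral_Iic_ofReal_sub g hxc, hzero, zero_add,
      intervalIntegral.integral_symm, ← intervalIntegral.integral_neg]
    simp only [neg_sub]

end Hinge

lemma intervalIntegral_sub_nonneg_of_monotone {g : ℝ → ℝ} (hg : Monotone g) (c x : ℝ) :
    0 ≤ ∫ t in c..x, (g t - g c) := by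
  rcases le_total c x with hcx | hxc
  · exact intervalIntegral.integral_nonneg hcx fun t ht => sub_nonneg.2 (hg ht.1)
  · rw [intervalIntegral.integral_symm, ← intervalIntegral.integral_neg]
    exact intervalIntegral.integral_nonneg hxc fun t ht =>
      neg_nonneg.2 (sub_nonpos.2 (hg ht.2))

lemma exists_stieltjesFunction_integral_eq_sub {φ : ℝ → ℝ} (hφ : ConvexOn ℝ Set.univ φ) :
    ∃ g : StieltjesFunction ℝ, ∀ a b, ∫ t in a..b, g t = φ b - φ a := by
  set φ' : ℝ → ℝ := fun x => derivWithin φ (Set.Ioi x) x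
  have hderiv : ∀ x, HasDerivWithinAt φ (φ' x) (Set.Ioi x) x := fun x =>
    hφ.hasDerivWithinAt_rightDeriv_of_mem_interior (by simp)
  have hmono : Monotone φ' := by simpa [monotoneOn_univ] using hφ.monotoneOn_rightDeriv
  have hae : ⇑hmono.stieltjesFunction =ᵐ[volume] φ' := by
    filter_upwards [hmono.countable_not_continuousAt.ae_notMem volume] with x hx
    have hx : ContinuousAt φ' x := by simpa using hx
    exact hx.continuousWithinAt.rightLim_eq
  refine ⟨hmono.stieltjesFunction, fun a b => ?_⟩
  rw [intervalIntegral.integral_congr_ae (hae.mono fun t ht _ => ht)]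
  exact intervalIntegral.integral_eq_sub_of_hasDeriv_right
    (hφ.continuousOn isOpen_univ |>.mono (Set.subset_univ _)) (fun x _ => hderiv x)
    hmono.intervalIntegrable

lemma exists_stieltjesFunction_integral_sub_eq {φ : ℝ → ℝ} (hφ : ConvexOn ℝ Set.univ φ) (c : ℝ) :
    ∃ g : StieltjesFunction ℝ, ∀ x, ∫ t in c..x, (g t - g c) = φ x - (φ c + g c * (x - c)) := by
  obtain ⟨g, hg⟩ := exists_stieltjesFunction_integral_eq_sub hφ
  refine ⟨g, fun x => ?_⟩
  rw [intervalIntegral.integral_sub g.mono.intervalIntegrable intervalIntegrable_const, hg,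
    intervalIntegral.integral_const, smul_eq_mul]
  ring

variable {Y Z : Type*} [MeasurableSpace Y] [MeasurableSpace Z] {P : Measure Y} {Q : Measure Z}
  {f : Y → ℝ} {g : Z → ℝ}

lemma lintegral_ofReal_neg_le_of_lintegral_ofReal_le (hf : Integrable f P) (hg : Integrable g Q)
    (hfg : ∫ y, f y ∂P = ∫ z, g z ∂Q)
    (hle : ∫⁻ y, ENNReal.ofReal (f y) ∂P ≤ ∫⁻ z, ENNReal.ofReal (g z) ∂Q) :
    ∫⁻ y, ENNReal.ofReal (-f y) ∂P ≤ ∫⁻ z, ENNReal.ofReal (-g z) ∂Q := by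
  rw [integral_eq_lintegral_pos_part_sub_lintegral_neg_part hf,
    integral_eq_lintegral_pos_part_sub_lintegral_neg_part hg] at hfg
  have hle' := ENNReal.toReal_mono hg.lintegral_lt_top.ne hle
  refine (ENNReal.toReal_le_toReal hf.neg.lintegral_lt_top.ne hg.neg.lintegral_lt_top.ne).1 ?_
  simp only [Pi.neg_apply]
  linarith

lemma put_le_of_call_le [IsFiniteMeasure P] [IsFiniteMeasure Q] (hf : Integrable f P)
    (hg : Integrable g Q) (hmass : P.real Set.univ = Q.real Set.univ)
    (hmean : ∫ y, f y ∂P = ∫ z, g z ∂Q) {t : ℝ}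
    (hcall : ∫⁻ y, ENNReal.ofReal (f y - t) ∂P ≤ ∫⁻ z, ENNReal.ofReal (g z - t) ∂Q) :
    ∫⁻ y, ENNReal.ofReal (t - f y) ∂P ≤ ∫⁻ z, ENNReal.ofReal (t - g z) ∂Q := by
  have heq : ∫ y, (f y - t) ∂P = ∫ z, (g z - t) ∂Q := by
    rw [integral_sub hf (integrable_const t), integral_sub hg (integrable_const t), hmean]
    simp [hmass]
  have hneg := lintegral_ofReal_neg_le_of_lintegral_ofReal_le
    (hf.sub (integrable_const t)) (hg.sub (integrable_const t)) heq hcall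
  simpa only [Pi.sub_apply, neg_sub] using hneg

lemma lintegral_ofReal_integral_stieltjes_sub [SFinite P] (hf : AEMeasurable f P)
    (G : StieltjesFunction ℝ) (c : ℝ) :
    ∫⁻ y, ENNReal.ofReal (∫ t in c..f y, (G t - G c)) ∂P =
      (∫⁻ u in Set.Ioi c, ∫⁻ y, ENNReal.ofReal (f y - u) ∂P ∂G.measure) +
        ∫⁻ u in Set.Iic c, ∫⁻ y, ENNReal.ofReal (u - f y) ∂P ∂G.measure := by
  have hmeas : ∀ S, AEMeasurable (Function.uncurry fun y u => f y - u)
      (P.prod (G.measure.restrict S)) := fun S =>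
    hf.comp_fst.sub measurable_snd.aemeasurable
  have hmeas' : ∀ S, AEMeasurable (Function.uncurry fun y u => u - f y)
      (P.prod (G.measure.restrict S)) := fun S =>
    measurable_snd.aemeasurable.sub hf.comp_fst
  have hcall : AEMeasurable (fun y => ∫⁻ u in Set.Ioi c, ENNReal.ofReal (f y - u) ∂G.measure) P :=
    (hmeas _).ennreal_ofReal.lintegral_prod_right'
  simp only [stieltjes_ofReal_integral_sub]
  rw [lintegral_add_left' hcall]
  exact congrArg₂ (· + ·) (lintegral_lintegral_swap (hmeas _).ennreal_ofReal)
    (lintegral_lintegral_swap (hmeas' _).ennreal_ofReal)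

-- Up to an affine function, which `hmass` and `hmean` make irrelevant, a convex function is a
-- mixture of the payoffs of calls and puts.
lemma integral_convex_comp_le_of_call_le [IsFiniteMeasure P] [IsFiniteMeasure Q]
    (hf : Integrable f P) (hg : Integrable g Q) (hmass : P.real Set.univ = Q.real Set.univ)
    (hmean : ∫ y, f y ∂P = ∫ z, g z ∂Q)
    (hcall : ∀ t, ∫⁻ y, ENNReal.ofReal (f y - t) ∂P ≤ ∫⁻ z, ENNReal.ofReal (g z - t) ∂Q)
    {φ : ℝ → ℝ} (hφ : ConvexOn ℝ Set.univ φ) (hφf : Integrable (fun y => φ (f y)) P)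
    (hφg : Integrable (fun z => φ (g z)) Q) : ∫ y, φ (f y) ∂P ≤ ∫ z, φ (g z) ∂Q := by
  obtain ⟨G, hG⟩ := exists_stieltjesFunction_integral_sub_eq hφ 0
  set R : ℝ → ℝ := fun x => ∫ t in (0 : ℝ)..x, (G t - G 0)
  have hR : ∀ x, R x = φ x - (φ 0 + G 0 * x) := fun x => (hG x).trans (by rw [sub_zero])
  have hR₀ : ∀ x, 0 ≤ R x := intervalIntegral_sub_nonneg_of_monotone G.mono 0
  have hRle : ∫⁻ y, ENNReal.ofReal (R (f y)) ∂P ≤ ∫⁻ z, ENNReal.ofReal (R (g z)) ∂Q := by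
    rw [lintegral_ofReal_integral_stieltjes_sub hf.aemeasurable,
      lintegral_ofReal_integral_stieltjes_sub hg.aemeasurable]
    gcongr with u u
    · exact hcall u
    · exact put_le_of_call_le hf hg hmass hmean (hcall u)
  have haffine : ∫ y, (φ 0 + G 0 * f y) ∂P = ∫ z, (φ 0 + G 0 * g z) ∂Q := by
    rw [integral_add (integrable_const _) (hf.const_mul _),
      integral_add (integrable_const _) (hg.const_mul _), integral_const_mul, integral_const_mul,
      hmean]
    simp [hmass]
  have hf' : Integrable (fun y => φ 0 + G 0 * f y) P := (integrable_const _).add (hf.const_mul _)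
  have hg' : Integrable (fun z => φ 0 + G 0 * g z) Q := (integrable_const _).add (hg.const_mul _)
  have hRf : Integrable (fun y => φ (f y) - (φ 0 + G 0 * f y)) P := hφf.sub hf'
  have hRg : Integrable (fun z => φ (g z) - (φ 0 + G 0 * g z)) Q := hφg.sub hg'
  simp only [hR] at hR₀ hRle
  rw [← ofReal_integral_eq_lintegral_ofReal hRf (ae_of_all _ fun y => hR₀ _),
    ← ofReal_integral_eq_lintegral_ofReal hRg (ae_of_all _ fun z => hR₀ _),
    ENNReal.ofReal_le_ofReal_iff (integral_nonneg fun z => hR₀ _),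
    integral_sub hφf hf', integral_sub hφg hg', haffine] at hRle
  exact (sub_le_sub_iff_right _).1 hRle

end ConvexOrder

section PosteriorMean

variable {Y : Type*} [MeasurableSpace Y] {μ : Measure ℝ} {ν : Measure Y} {π : ℝ → ℝ}
  {κ : ℝ → Y → ℝ}

/-- The density of the observation under the prior `π`, i.e. the normalizer of the posterior. -/
noncomputable def evidence (μ : Measure ℝ) (π : ℝ → ℝ) (κ : ℝ → Y → ℝ) (y : Y) : ℝ :=
  ∫ x, π x * κ x y ∂μ

/-- The mean of the state given the observation `y`, which is `0` where the evidence vanishes. -/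
noncomputable def posteriorMean (μ : Measure ℝ) (π : ℝ → ℝ) (κ : ℝ → Y → ℝ) (y : Y) : ℝ :=
  (∫ x, x * (π x * κ x y) ∂μ) / evidence μ π κ y

/-- The law of the observation under the prior `π`. -/
noncomputable def observationLaw (μ : Measure ℝ) (ν : Measure Y) (π : ℝ → ℝ) (κ : ℝ → Y → ℝ) :
    Measure Y :=
  ν.withDensity fun y => ENNReal.ofReal (evidence μ π κ y)

lemma integrable_id_mul_of_integrable_sq_mul (hπ : ∀ x, 0 ≤ π x) (hπi : Integrable π μ)
    (hx2π : Integrable (fun x => x ^ 2 * π x) μ) : Integrable (fun x => x * π x) μ := by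
  refine (hπi.add hx2π).mono' (measurable_id.aestronglyMeasurable.mul hπi.1)
    (ae_of_all _ fun x => ?_)
  rw [norm_mul, Real.norm_of_nonneg (hπ x), Real.norm_eq_abs, Pi.add_apply, ← one_add_mul]
  exact mul_le_mul_of_nonneg_right (by nlinarith [sq_abs x, sq_nonneg (|x| - 1)]) (hπ x)

lemma MarkovDensity.evidence_nonneg (hκ : MarkovDensity κ ν) (hπ : ∀ x, 0 ≤ π x) (y : Y) :
    0 ≤ evidence μ π κ y :=
  integral_nonneg fun x => mul_nonneg (hπ x) (hκ.nonneg x y)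

namespace MarkovDensity

variable [SFinite μ] [SFinite ν]

lemma integrable_evidence (hκ : MarkovDensity κ ν) (hπi : Integrable π μ) :
    Integrable (evidence μ π κ) ν :=
  hκ.integrable_integral_mul hπi

lemma ae_posteriorMean_mul_evidence (hκ : MarkovDensity κ ν) (hπ : ∀ x, 0 ≤ π x)
    (hπi : Integrable π μ) :
    ∀ᵐ y ∂ν, posteriorMean μ π κ y * evidence μ π κ y = ∫ x, x * (π x * κ x y) ∂μ := by
  filter_upwards [hκ.ae_integrable_mul hπi] with y hy
  refine div_mul_cancel_of_imp fun hzero => integral_eq_zero_of_ae ?_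
  have hnonneg : 0 ≤ fun x => π x * κ x y := fun x => mul_nonneg (hπ x) (hκ.nonneg x y)
  filter_upwards [(integral_eq_zero_iff_of_nonneg hnonneg hy).1 hzero] with x hx
  simp only [hx, Pi.zero_apply, mul_zero]

lemma aemeasurable_posteriorMean (hκ : MarkovDensity κ ν) (hπi : Integrable π μ)
    (hxπ : Integrable (fun x => x * π x) μ) : AEMeasurable (posteriorMean μ π κ) ν := by
  have hnum := hκ.integrable_integral_mul hxπ
  simp only [mul_assoc] at hnum
  exact hnum.aemeasurable.div (hκ.integrable_evidence hπi).aemeasurable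

lemma integrable_observationLaw_iff (hκ : MarkovDensity κ ν) (hπ : ∀ x, 0 ≤ π x)
    (hπi : Integrable π μ) {F : Y → ℝ} : Integrable F (observationLaw μ ν π κ) ↔
      Integrable (fun y => F y * evidence μ π κ y) ν := by
  rw [observationLaw, integrable_withDensity_iff_integrable_smul₀'
    (hκ.integrable_evidence hπi).aemeasurable.ennreal_ofReal (ae_of_all _ fun _ => by simp)]
  simp only [ENNReal.toReal_ofReal (hκ.evidence_nonneg hπ _), smul_eq_mul, mul_comm]

lemma integral_observationLaw (hκ : MarkovDensity κ ν) (hπ : ∀ x, 0 ≤ π x)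
    (hπi : Integrable π μ) (F : Y → ℝ) :
    ∫ y, F y ∂observationLaw μ ν π κ = ∫ y, F y * evidence μ π κ y ∂ν := by
  rw [observationLaw, integral_withDensity_eq_integral_toReal_smul₀
    (hκ.integrable_evidence hπi).aemeasurable.ennreal_ofReal (ae_of_all _ fun _ => by simp)]
  simp only [ENNReal.toReal_ofReal (hκ.evidence_nonneg hπ _), smul_eq_mul, mul_comm]

lemma isFiniteMeasure_observationLaw (hκ : MarkovDensity κ ν) (hπi : Integrable π μ) :
    IsFiniteMeasure (observationLaw μ ν π κ) :=
  isFiniteMeasure_withDensity_ofReal (hκ.integrable_evidence hπi).2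

lemma measureReal_univ_observationLaw (hκ : MarkovDensity κ ν) (hπ : ∀ x, 0 ≤ π x)
    (hπi : Integrable π μ) : (observationLaw μ ν π κ).real Set.univ = ∫ x, π x ∂μ := by
  have hone := hκ.integral_observationLaw hπ hπi fun _ => 1
  simp only [integral_const, smul_eq_mul, mul_one, one_mul] at hone
  exact hone.trans (hκ.integral_integral_mul hπi)

lemma integrable_posteriorMean (hκ : MarkovDensity κ ν) (hπ : ∀ x, 0 ≤ π x)
    (hπi : Integrable π μ) (hxπ : Integrable (fun x => x * π x) μ) :
    Integrable (posteriorMean μ π κ) (observationLaw μ ν π κ) := by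
  have hnum := hκ.integrable_integral_mul hxπ
  simp only [mul_assoc] at hnum
  exact (hκ.integrable_observationLaw_iff hπ hπi).2
    (hnum.congr (EventuallyEq.symm (hκ.ae_posteriorMean_mul_evidence hπ hπi)))

lemma integral_posteriorMean (hκ : MarkovDensity κ ν) (hπ : ∀ x, 0 ≤ π x)
    (hπi : Integrable π μ) (hxπ : Integrable (fun x => x * π x) μ) :
    ∫ y, posteriorMean μ π κ y ∂observationLaw μ ν π κ = ∫ x, x * π x ∂μ := by
  rw [hκ.integral_observationLaw hπ hπi, ← hκ.integral_integral_mul hxπ,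
    integral_congr_ae (hκ.ae_posteriorMean_mul_evidence hπ hπi)]
  simp only [mul_assoc]

lemma lintegral_posteriorMean_sub (hκ : MarkovDensity κ ν) (hπ : ∀ x, 0 ≤ π x)
    (hπi : Integrable π μ) (hxπ : Integrable (fun x => x * π x) μ) (t : ℝ) :
    ∫⁻ y, ENNReal.ofReal (posteriorMean μ π κ y - t) ∂observationLaw μ ν π κ =
      acceptanceValue μ ν (fun x => (x - t) * π x) κ := by
  rw [observationLaw, lintegral_withDensity_eq_lintegral_mul₀
    (hκ.integrable_evidence hπi).aemeasurable.ennreal_ofReal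
    ((hκ.aemeasurable_posteriorMean hπi hxπ).sub_const t).ennreal_ofReal, acceptanceValue]
  refine lintegral_congr_ae ?_
  filter_upwards [hκ.ae_posteriorMean_mul_evidence hπ hπi, hκ.ae_integrable_mul hπi,
    hκ.ae_integrable_mul hxπ] with y hmean hy hxy
  simp only [mul_assoc] at hxy
  rw [Pi.mul_apply, ← ENNReal.ofReal_mul (hκ.evidence_nonneg hπ y)]
  congr 1
  simp only [sub_mul, mul_assoc]
  rw [integral_sub hxy (hy.const_mul t), integral_const_mul, ← hmean, evidence]
  ring

end MarkovDensity

variable {Y' : Type*} [MeasurableSpace Y'] {ν' : Measure Y'} {κ' : ℝ → Y' → ℝ}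
  [SFinite μ] [SFinite ν] [SFinite ν']

lemma CrossingDominated.integral_posteriorMean_le (hκκ' : CrossingDominated μ ν κ ν' κ')
    (hκ : MarkovDensity κ ν) (hκ' : MarkovDensity κ' ν') (hπ : ∀ x, 0 ≤ π x)
    (hπi : Integrable π μ) (hxπ : Integrable (fun x => x * π x) μ) {φ : ℝ → ℝ}
    (hφ : ConvexOn ℝ Set.univ φ)
    (hint : Integrable (fun y => φ (posteriorMean μ π κ y) * evidence μ π κ y) ν)
    (hint' : Integrable (fun y => φ (posteriorMean μ π κ' y) * evidence μ π κ' y) ν') :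
    ∫ y, φ (posteriorMean μ π κ y) * evidence μ π κ y ∂ν ≤
      ∫ y, φ (posteriorMean μ π κ' y) * evidence μ π κ' y ∂ν' := by
  have := hκ.isFiniteMeasure_observationLaw hπi
  have := hκ'.isFiniteMeasure_observationLaw hπi
  rw [← hκ.integral_observationLaw hπ hπi fun y => φ (posteriorMean μ π κ y),
    ← hκ'.integral_observationLaw hπ hπi fun y => φ (posteriorMean μ π κ' y)]
  refine integral_convex_comp_le_of_call_le (hκ.integrable_posteriorMean hπ hπi hxπ)
    (hκ'.integrable_posteriorMean hπ hπi hxπ) ?_ ?_ (fun t => ?_) hφ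
    ((hκ.integrable_observationLaw_iff hπ hπi).2 hint)
    ((hκ'.integrable_observationLaw_iff hπ hπi).2 hint')
  · rw [hκ.measureReal_univ_observationLaw hπ hπi, hκ'.measureReal_univ_observationLaw hπ hπi]
  · rw [hκ.integral_posteriorMean hπ hπi hxπ, hκ'.integral_posteriorMean hπ hπi hxπ]
  · rw [hκ.lintegral_posteriorMean_sub hπ hπi hxπ, hκ'.lintegral_posteriorMean_sub hπ hπi hxπ]
    have hpayoff : Integrable (fun x => (x - t) * π x) μ := by
      simp only [sub_mul]
      exact hxπ.sub (hπi.const_mul t)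
    have hcross : CrossesZeroAt (fun x => x - t) t :=
      ⟨fun x => sub_nonpos.2, fun x => sub_nonneg.2⟩
    exact hκκ' hpayoff (hcross.mul_of_nonneg hπ)

section MeanSquareError

/-- The mean square error of the posterior mean as an estimator of the state. -/
noncomputable def posteriorMeanMSE (μ : Measure ℝ) (ν : Measure Y) (π : ℝ → ℝ) (κ : ℝ → Y → ℝ) :
    ℝ :=
  ∫ y, ∫ x, (x - posteriorMean μ π κ y) ^ 2 * (π x * κ x y) ∂μ ∂ν

namespace MarkovDensity

lemma ae_integral_sub_posteriorMean_sq (hκ : MarkovDensity κ ν) (hπ : ∀ x, 0 ≤ π x)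
    (hπi : Integrable π μ) (hx2π : Integrable (fun x => x ^ 2 * π x) μ) :
    ∀ᵐ y ∂ν, ∫ x, (x - posteriorMean μ π κ y) ^ 2 * (π x * κ x y) ∂μ =
      (∫ x, x ^ 2 * π x * κ x y ∂μ) - posteriorMean μ π κ y ^ 2 * evidence μ π κ y := by
  have hxπ := integrable_id_mul_of_integrable_sq_mul hπ hπi hx2π
  filter_upwards [hκ.ae_posteriorMean_mul_evidence hπ hπi, hκ.ae_integrable_mul hπi,
    hκ.ae_integrable_mul hxπ, hκ.ae_integrable_mul hx2π] with y hmean h0 h1 h2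
  simp only [mul_assoc] at h1
  set m := posteriorMean μ π κ y
  have h21 : Integrable (fun x => x ^ 2 * π x * κ x y - 2 * m * (x * (π x * κ x y))) μ :=
    h2.sub (h1.const_mul _)
  calc ∫ x, (x - m) ^ 2 * (π x * κ x y) ∂μ
      = ∫ x, x ^ 2 * π x * κ x y - 2 * m * (x * (π x * κ x y)) + m ^ 2 * (π x * κ x y) ∂μ := by
        congr 1 with x
        ring
    _ = (∫ x, x ^ 2 * π x * κ x y ∂μ) - 2 * m * (m * evidence μ π κ y) +
          m ^ 2 * evidence μ π κ y := by
        rw [integral_add h21 (h0.const_mul _),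
          integral_sub h2 (h1.const_mul _), integral_const_mul, integral_const_mul, hmean, evidence]
    _ = _ := by ring

lemma integrable_posteriorMean_sq_mul_evidence (hκ : MarkovDensity κ ν) (hπ : ∀ x, 0 ≤ π x)
    (hπi : Integrable π μ) (hx2π : Integrable (fun x => x ^ 2 * π x) μ) :
    Integrable (fun y => posteriorMean μ π κ y ^ 2 * evidence μ π κ y) ν := by
  have hxπ := integrable_id_mul_of_integrable_sq_mul hπ hπi hx2π
  refine (hκ.integrable_integral_mul hx2π).mono'
    (((hκ.aemeasurable_posteriorMean hπi hxπ).pow_const 2).mul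
      (hκ.integrable_evidence hπi).aemeasurable).aestronglyMeasurable ?_
  filter_upwards [hκ.ae_integral_sub_posteriorMean_sq hπ hπi hx2π] with y hy
  rw [Real.norm_of_nonneg (mul_nonneg (sq_nonneg _) (hκ.evidence_nonneg hπ y)), ← sub_nonneg, ← hy]
  exact integral_nonneg fun x => mul_nonneg (sq_nonneg _) (mul_nonneg (hπ x) (hκ.nonneg x y))

lemma posteriorMeanMSE_eq (hκ : MarkovDensity κ ν) (hπ : ∀ x, 0 ≤ π x)
    (hπi : Integrable π μ) (hx2π : Integrable (fun x => x ^ 2 * π x) μ) :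
    posteriorMeanMSE μ ν π κ =
      (∫ x, x ^ 2 * π x ∂μ) - ∫ y, posteriorMean μ π κ y ^ 2 * evidence μ π κ y ∂ν := by
  rw [posteriorMeanMSE, integral_congr_ae (hκ.ae_integral_sub_posteriorMean_sq hπ hπi hx2π),
    integral_sub (hκ.integrable_integral_mul hx2π)
      (hκ.integrable_posteriorMean_sq_mul_evidence hπ hπi hx2π),
    hκ.integral_integral_mul hx2π]

end MarkovDensity

lemma CrossingDominated.posteriorMeanMSE_le (hκκ' : CrossingDominated μ ν κ ν' κ')
    (hκ : MarkovDensity κ ν) (hκ' : MarkovDensity κ' ν') (hπ : ∀ x, 0 ≤ π x)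
    (hπi : Integrable π μ) (hx2π : Integrable (fun x => x ^ 2 * π x) μ) :
    posteriorMeanMSE μ ν' π κ' ≤ posteriorMeanMSE μ ν π κ := by
  rw [hκ.posteriorMeanMSE_eq hπ hπi hx2π, hκ'.posteriorMeanMSE_eq hπ hπi hx2π]
  exact sub_le_sub_left (hκκ'.integral_posteriorMean_le hκ hκ' hπ hπi
    (integrable_id_mul_of_integrable_sq_mul hπ hπi hx2π) even_two.convexOn_pow
    (hκ.integrable_posteriorMean_sq_mul_evidence hπ hπi hx2π)
    (hκ'.integrable_posteriorMean_sq_mul_evidence hπ hπi hx2π)) _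

end MeanSquareError

end PosteriorMean

theorem stmt_2_general {B₁ B₂ : ℝ → ℝ → ℝ} (hB₁ : MarkovDensity B₁ volume)
    (hB₂ : MarkovDensity B₂ volume) (hTP : IsTP2 B₁)
    (hcross : ∀ c y, SingleCrossing fun x => obsCdf B₁ c x - obsCdf B₂ y x)
    {π₀ : ℝ → ℝ} (hπ : ∀ x, 0 ≤ π₀ x) (hπi : Integrable π₀)
    (hπ2 : Integrable fun x => x ^ 2 * π₀ x) (k : ℕ) :
    (∀ φ : ℝ → ℝ, ConvexOn ℝ Set.univ φ →
      Integrable (fun ys : Fin k → ℝ => φ (cmean B₁ π₀ ys) * nrm B₁ π₀ ys) →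
      Integrable (fun ys : Fin k → ℝ => φ (cmean B₂ π₀ ys) * nrm B₂ π₀ ys) →
      ∫ ys : Fin k → ℝ, φ (cmean B₁ π₀ ys) * nrm B₁ π₀ ys ≤
        ∫ ys : Fin k → ℝ, φ (cmean B₂ π₀ ys) * nrm B₂ π₀ ys) ∧
    mse B₂ π₀ k ≤ mse B₁ π₀ k := by
  have hdom := (crossingDominated_of_singleCrossing (μ := volume) hB₁ hB₂ hTP hcross).pi hB₁ hB₂ k
  exact ⟨fun φ => hdom.integral_posteriorMean_le hB₁.pi hB₂.pi hπ hπi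
      (integrable_id_mul_of_integrable_sq_mul hπ hπi hπ2),
    hdom.posteriorMeanMSE_le hB₁.pi hB₂.pi hπ hπi hπ2⟩

/-- **Global convex dominance for continuous-state Bayesian localization.**
Under (A1) TP2, (A2) single crossing and (SMA), for every horizon `k ≥ 1`,
every prior density `π₀` (with finite second moment) and every convex `φ` for
which the integrals exist,
`∫ φ(m₁) σ₁ ≤ ∫ φ(m₂) σ₂`; in particular `MSE(m₁) ≥ MSE(m₂)`. -/
theorem stmt_2 (B₁ B₂ : ℝ → ℝ → ℝ)
    (hB₁m : Measurable (Function.uncurry B₁)) (hB₂m : Measurable (Function.uncurry B₂))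
    (hB₁nn : ∀ x y, 0 ≤ B₁ x y) (hB₂nn : ∀ x y, 0 ≤ B₂ x y)
    (hB₁int : ∀ x, ∫ y, B₁ x y = 1) (hB₂int : ∀ x, ∫ y, B₂ x y = 1)
    -- (A1): TP2 observation kernels
    (hA1₁ : ∀ x x' y y' : ℝ, x ≤ x' → y ≤ y' → B₁ x y' * B₁ x' y ≤ B₁ x y * B₁ x' y')
    (hA1₂ : ∀ x x' y y' : ℝ, x ≤ x' → y ≤ y' → B₂ x y' * B₂ x' y ≤ B₂ x y * B₂ x' y')
    -- (A2): single crossing condition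
    (hA2 : ∀ ybar y : ℝ,
      SingleCrossing (fun x : ℝ => obsCdf B₁ ybar x - obsCdf B₂ y x))
    -- (SMA): product single crossing of complementary cdfs
    (hSMA : ∀ (j : ℕ), 1 ≤ j → ∀ (ys ybars : Fin j → ℝ),
      SingleCrossing (fun x : ℝ =>
        (∏ t, (1 - obsCdf B₂ (ys t) x)) - ∏ t, (1 - obsCdf B₁ (ybars t) x)))
    -- prior density with finite second moment
    (π₀ : ℝ → ℝ) (hπm : Measurable π₀) (hπnn : ∀ x, 0 ≤ π₀ x) (hπ : ∫ x, π₀ x = 1)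
    (hπ2 : Integrable (fun x => x ^ 2 * π₀ x))
    (k : ℕ) (hk : 1 ≤ k)
    -- normalizers positive and finite
    (hσ₁int : ∀ ys : Fin k → ℝ, Integrable (fun x => π₀ x * ∏ t, B₁ x (ys t)))
    (hσ₂int : ∀ ys : Fin k → ℝ, Integrable (fun x => π₀ x * ∏ t, B₂ x (ys t)))
    (hσ₁pos : ∀ ys : Fin k → ℝ, 0 < nrm B₁ π₀ ys)
    (hσ₂pos : ∀ ys : Fin k → ℝ, 0 < nrm B₂ π₀ ys)
    (hm₁int : ∀ ys : Fin k → ℝ, Integrable (fun x => x * (π₀ x * ∏ t, B₁ x (ys t))))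
    (hm₂int : ∀ ys : Fin k → ℝ, Integrable (fun x => x * (π₀ x * ∏ t, B₂ x (ys t)))) :
    (∀ φ : ℝ → ℝ, ConvexOn ℝ Set.univ φ →
      Integrable (fun ys : Fin k → ℝ => φ (cmean B₁ π₀ ys) * nrm B₁ π₀ ys) →
      Integrable (fun ys : Fin k → ℝ => φ (cmean B₂ π₀ ys) * nrm B₂ π₀ ys) →
      (∫ ys : Fin k → ℝ, φ (cmean B₁ π₀ ys) * nrm B₁ π₀ ys) ≤
        ∫ ys : Fin k → ℝ, φ (cmean B₂ π₀ ys) * nrm B₂ π₀ ys) ∧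
    ((∀ ys : Fin k → ℝ,
        Integrable (fun x => (x - cmean B₁ π₀ ys) ^ 2 * (π₀ x * ∏ t, B₁ x (ys t)))) →
      (∀ ys : Fin k → ℝ,
        Integrable (fun x => (x - cmean B₂ π₀ ys) ^ 2 * (π₀ x * ∏ t, B₂ x (ys t)))) →
      Integrable (fun ys : Fin k → ℝ =>
        ∫ x, (x - cmean B₁ π₀ ys) ^ 2 * (π₀ x * ∏ t, B₁ x (ys t))) →
      Integrable (fun ys : Fin k → ℝ =>
        ∫ x, (x - cmean B₂ π₀ ys) ^ 2 * (π₀ x * ∏ t, B₂ x (ys t))) →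
      mse B₂ π₀ k ≤ mse B₁ π₀ k) := by
  obtain ⟨hconvex, hmse⟩ := stmt_2_general ⟨hB₁m, hB₁nn, hB₁int⟩ ⟨hB₂m, hB₂nn, hB₂int⟩ hA1₁ hA2
    hπnn (integrable_of_integral_eq_one hπ) hπ2 k
  exact ⟨hconvex, fun _ _ _ _ => hmse⟩
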